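/- arXiv:1509.05688 — 2 statements merged into one kernel-verified Lean document; each statement's English description precedes it below -/
import Mathlib

section
/- Every subgroup of a balanced group is balanced. Conversely, if a group G contains a finite index subgroup H which is balanced, then G is balanced. -/
/-- A group `G` is balanced if for every element `x` of infinite order and all integers
`m, n`, if `x ^ m` is conjugate in `G` to `x ^ n` then `|m| = |n|`. -/
def IsBalanced (G : Type*) [Group G] : Prop :=
  ∀ x : G, ¬ IsOfFinOrder x → ∀ m n : ℤ, (∃ g : G, g * x ^ m * g⁻¹ = x ^ n) → |m| = |n|

section

variable {G : Type*} [Group G]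

theorem isBalanced_iff_semiconjBy :
    IsBalanced G ↔
      ∀ g x : G, ¬ IsOfFinOrder x → ∀ m n : ℤ, SemiconjBy g (x ^ m) (x ^ n) → |m| = |n| := by
  simp only [IsBalanced, SemiconjBy, mul_inv_eq_iff_eq_mul]
  exact ⟨fun h g x hx m n hg ↦ h x hx m n ⟨g, hg⟩,
    fun h x hx m n ⟨g, hg⟩ ↦ h g x hx m n hg⟩

theorem IsBalanced.of_injective {K : Type*} [Group K] {f : K →* G} (hf : Function.Injective f)
    (hG : IsBalanced G) : IsBalanced K := by
  rw [isBalanced_iff_semiconjBy] at hG ⊢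
  intro g x hx m n hg
  refine hG (f g) (f x) (mt hf.isOfFinOrder_iff.1 hx) m n ?_
  simpa only [map_zpow] using hg.map f

theorem semiconjBy_pow_zpow_pow {g x : G} {m n : ℤ} (h : SemiconjBy g (x ^ m) (x ^ n)) (k : ℕ) :
    SemiconjBy (g ^ k) (x ^ m ^ k) (x ^ n ^ k) := by
  induction k with
  | zero => simp
  | succ k ih =>
    have conj_g : SemiconjBy g (x ^ m ^ (k + 1)) ((x ^ m ^ k) ^ n) := by
      simpa only [pow_succ', zpow_mul, zpow_comm x n] using h.zpow_right (m ^ k)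
    have conj_pow_g : SemiconjBy (g ^ k) ((x ^ m ^ k) ^ n) (x ^ n ^ (k + 1)) := by
      simpa only [pow_succ, zpow_mul] using ih.zpow_right n
    simpa only [pow_succ] using conj_pow_g.mul_left conj_g

/- Neither `x` nor the conjugator `g` need lie in `H`. Replacing `x` by a power keeps the exponents
`m, n`, while replacing `g` by `g ^ k` turns them into `m ^ k, n ^ k`, which still determine
`|m|, |n|`. -/
theorem IsBalanced.of_forall_exists_pow_mem {H : Subgroup G}
    (hpow : ∀ g : G, ∃ k : ℕ, 0 < k ∧ g ^ k ∈ H) (hH : IsBalanced H) : IsBalanced G := by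
  rw [isBalanced_iff_semiconjBy] at hH ⊢
  intro g x hx m n hg
  obtain ⟨k, hk, hgk⟩ := hpow g
  obtain ⟨l, hl, hxl⟩ := hpow x
  let y : H := ⟨x ^ l, hxl⟩
  have hy : ¬ IsOfFinOrder y := by
    rw [← H.subtype_injective.isOfFinOrder_iff]
    exact fun h ↦ hx (h.of_pow hl.ne')
  have conj_g : SemiconjBy g ((x ^ l) ^ m) ((x ^ l) ^ n) := by
    simpa only [← zpow_natCast, zpow_comm x _ (l : ℤ)] using hg.pow_right l
  have conj_pow_g : SemiconjBy (⟨g ^ k, hgk⟩ : H) (y ^ m ^ k) (y ^ n ^ k) :=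
    Subtype.ext (semiconjBy_pow_zpow_pow conj_g k).eq
  have abs_pow_eq : |m| ^ k = |n| ^ k := by
    simpa only [abs_pow] using hH _ y hy _ _ conj_pow_g
  exact (pow_left_inj₀ (abs_nonneg m) (abs_nonneg n) hk.ne').1 abs_pow_eq

theorem balanced_subgroup_general (H : Subgroup G) :
    (IsBalanced G → IsBalanced H) ∧
    ((∀ g : G, ∃ k : ℕ, 0 < k ∧ g ^ k ∈ H) → IsBalanced H → IsBalanced G) :=
  ⟨.of_injective H.subtype_injective, .of_forall_exists_pow_mem⟩

end

/-- Every subgroup of a balanced group is balanced; conversely, if `G` contains a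
balanced subgroup of finite index then `G` is balanced. -/
theorem balanced_subgroup {G : Type*} [Group G] :
    (∀ H : Subgroup G, IsBalanced G → IsBalanced H) ∧
    (∀ H : Subgroup G, H.FiniteIndex → IsBalanced H → IsBalanced G) := by
  refine ⟨fun H ↦ (balanced_subgroup_general H).1, fun H hfin ↦ (balanced_subgroup_general H).2 ?_⟩
  intro g
  obtain ⟨k, hk, -, hgk⟩ := Subgroup.exists_pow_mem_of_index_ne_zero hfin.index_ne_zero g
  exact ⟨k, hk, hgk⟩
end

section
/- Let G be a residually finite group which is not balanced. Then G contains a subgroup isomorphic to G_{r,s} for some nonzero coprime integers r, s with |r| ≠ |s|. Indeed, if g a^r g⁻¹ = a^s in G with a of infinite order and r, s nonzero coprime with |r| ≠ |s|, then ⟨a, g⟩ ≅ G_{r,s}. -/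
/-- The rational `s / r` as a unit of `ℚ` (junk value `1` if `s / r = 0`). -/
def grsUnit (r s : ℤ) : ℚˣ :=
  if h : ((s : ℚ) / (r : ℚ)) = 0 then 1 else Units.mk0 _ h

/-- Multiplication by `s / r` as an automorphism of the additive group `ℚ`,
viewed multiplicatively. -/
def grsAut (r s : ℤ) : MulAut (Multiplicative ℚ) :=
  AddEquiv.toMultiplicative (DistribMulAction.toAddAut ℚˣ ℚ (grsUnit r s))

/-- The action of `ℤ` on `ℚ` in which the generator acts by multiplication by `s / r`. -/
def grsAction (r s : ℤ) : Multiplicative ℤ →* MulAut (Multiplicative ℚ) :=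
  zpowersHom (MulAut (Multiplicative ℚ)) (grsAut r s)

/-- The ambient semidirect product `ℚ ⋊ ℤ`, with the generator of `ℤ` acting on `ℚ`
by multiplication by `s / r`. -/
abbrev GrsAmbient (r s : ℤ) : Type :=
  SemidirectProduct (Multiplicative ℚ) (Multiplicative ℤ) (grsAction r s)

/-- The element `(1, e)` of `ℚ ⋊ ℤ`. -/
def grsA (r s : ℤ) : GrsAmbient r s :=
  ⟨Multiplicative.ofAdd (1 : ℚ), 1⟩

/-- The element `(0, t)` of `ℚ ⋊ ℤ`. -/
def grsT (r s : ℤ) : GrsAmbient r s :=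
  ⟨1, Multiplicative.ofAdd (1 : ℤ)⟩

/-- The group `G_{r,s} = ℤ[1/(rs)] ⋊ ℤ`, realised as the subgroup of `ℚ ⋊ ℤ`
generated by the elements `(1, e)` and `(0, t)` (for coprime `r, s` the subgroup of
`ℚ` generated by the `ℤ`-orbit of `1` under multiplication by `s/r` is exactly
`ℤ[1/(rs)]`). -/
def Grs (r s : ℤ) : Subgroup (GrsAmbient r s) :=
  Subgroup.closure {grsA r s, grsT r s}

/-- The element `(1, e)` of `G_{r,s}`. -/
def grsOne (r s : ℤ) : Grs r s :=
  ⟨grsA r s, Subgroup.subset_closure (Set.mem_insert _ _)⟩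

/-- A group is residually finite if every nontrivial element survives in some finite
quotient, i.e. avoids some normal subgroup of finite index. -/
def ResiduallyFinite (G : Type*) [Group G] : Prop :=
  ∀ g : G, g ≠ 1 → ∃ N : Subgroup G, N.Normal ∧ N.FiniteIndex ∧ g ∉ N

/-!
Suppose `g * a ^ r * g⁻¹ = a ^ s`. In a torsion quotient the conjugate powers `a ^ r` and `a ^ s`
have the same order, so `r` and `s`, being coprime, are both coprime to the order of `a`. Hence
`a ^ q` makes sense there for every `q ∈ ℤ[1/(rs)]`, and conjugation by `g` sends it to
`a ^ (s / r * q)`: the quotient of `⟨a, g⟩` is an image of `G_{r,s}`. Consequently every element of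
the subgroup of `G × G_{r,s}` generated by `(a, (1, e))` and `(g, (0, t))` has, in each torsion
quotient, the form `(a ^ q * g ^ k, (q, t ^ k))`.

That subgroup is the graph of an isomorphism. An element `(x, 1)` has `q = k = 0`, so `x` dies in
every torsion quotient and is trivial. For an element `(1, (q, t ^ k))`, `g ^ k` is a power of `a`
in every torsion quotient, so it commutes with `a`; this forces `k = 0` because `g ^ n` conjugates
`a ^ (r ^ n)` to `a ^ (s ^ n)`, and then the numerator of `q` vanishes because `a` has infinite
order.
-/

section

/-- A group is residually torsion if every nontrivial element survives in some torsion quotient. -/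
def ResiduallyTorsion (G : Type*) [Group G] : Prop :=
  ∀ g : G, g ≠ 1 → ∃ (N : Subgroup G) (_ : N.Normal), IsMulTorsion (G ⧸ N) ∧ g ∉ N

/-- `IsRatPow a q b` says that `b` is the power `a ^ q` with rational exponent `q`: it lies in
`⟨a⟩` and `b ^ n = a ^ m` for some way of writing `q = m / n` with `n` coprime to the order of `a`.
The coprimality makes `b` unique. If `a` has infinite order, so that `orderOf a = 0`, it forces
`n = ±1`. -/
def IsRatPow {G : Type*} [Group G] (a : G) (q : ℚ) (b : G) : Prop :=
  b ∈ Subgroup.zpowers a ∧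
    ∃ n m : ℤ, IsCoprime n (orderOf a : ℤ) ∧ n * q = m ∧ b ^ n = a ^ m

variable {G : Type*} [Group G] {a b c g : G} {r s : ℤ}

theorem nonempty_closure_image_fst_mulEquiv_snd {H : Type*} [Group H] {S : Set (G × H)}
    (hS : ∀ z ∈ Subgroup.closure S, z.1 = 1 ↔ z.2 = 1) :
    Nonempty (Subgroup.closure (Prod.fst '' S) ≃* Subgroup.closure (Prod.snd '' S)) := by
  let K := Subgroup.closure S
  have hfst : Function.Injective ((MonoidHom.fst G H).subgroupMap K) := by
    refine (injective_iff_map_eq_one _).2 fun z hz => ?_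
    have hz₁ : z.1.1 = 1 := congrArg Subtype.val hz
    exact Subtype.ext (Prod.ext hz₁ ((hS z z.2).1 hz₁))
  have hsnd : Function.Injective ((MonoidHom.snd G H).subgroupMap K) := by
    refine (injective_iff_map_eq_one _).2 fun z hz => ?_
    have hz₂ : z.1.2 = 1 := congrArg Subtype.val hz
    exact Subtype.ext (Prod.ext ((hS z z.2).2 hz₂) hz₂)
  let e₁ := MulEquiv.ofBijective _ ⟨hfst, MonoidHom.subgroupMap_surjective _ K⟩
  let e₂ := MulEquiv.ofBijective _ ⟨hsnd, MonoidHom.subgroupMap_surjective _ K⟩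
  exact ⟨(MulEquiv.subgroupCongr (MonoidHom.map_closure (MonoidHom.fst G H) S)).symm.trans <|
    e₁.symm.trans <| e₂.trans <|
      MulEquiv.subgroupCongr (MonoidHom.map_closure (MonoidHom.snd G H) S)⟩

theorem ResiduallyFinite.residuallyTorsion (hG : ResiduallyFinite G) : ResiduallyTorsion G := by
  intro g hg
  obtain ⟨N, hN, hfin, hgN⟩ := hG g hg
  exact ⟨N, hN, fun x => isOfFinOrder_of_finite x, hgN⟩

theorem ResiduallyTorsion.eq_one (hG : ResiduallyTorsion G)
    (h : ∀ (N : Subgroup G) [N.Normal], IsMulTorsion (G ⧸ N) → (g : G ⧸ N) = 1) : g = 1 := by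
  by_contra hg
  obtain ⟨N, hN, htors, hgN⟩ := hG g hg
  exact hgN ((QuotientGroup.eq_one_iff g).1 (h N htors))

theorem ne_zero_of_semiconjBy_zpow (ha : ¬ IsOfFinOrder a) (habs : |r| ≠ |s|)
    (h : SemiconjBy g (a ^ r) (a ^ s)) : r ≠ 0 := by
  rintro rfl
  have has : a ^ s = 1 := (h.eq_one_iff g).1 (zpow_zero a)
  have hs : s = 0 := injective_zpow_iff_not_isOfFinOrder.2 ha (has.trans (zpow_zero a).symm)
  exact habs (by rw [hs])

theorem semiconjBy_pow_zpow_pow_s11 (h : SemiconjBy g (a ^ r) (a ^ s)) (n : ℕ) :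
    SemiconjBy (g ^ n) (a ^ r ^ n) (a ^ s ^ n) := by
  induction n with
  | zero => simp
  | succ n ih =>
    have hn : SemiconjBy (g ^ n) (a ^ r ^ (n + 1)) (a ^ (s ^ n * r)) := by
      simpa only [← zpow_mul, ← pow_succ] using ih.zpow_right r
    have hg : SemiconjBy g (a ^ (s ^ n * r)) (a ^ s ^ (n + 1)) := by
      simpa only [← zpow_mul, ← pow_succ', mul_comm r] using h.zpow_right (s ^ n)
    rw [pow_succ']
    exact hg.mul_left hn

theorem eq_zero_of_commute_zpow (ha : ¬ IsOfFinOrder a) (habs : |r| ≠ |s|)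
    (h : SemiconjBy g (a ^ r) (a ^ s)) {k : ℤ} (hk : Commute (g ^ k) a) : k = 0 := by
  by_contra hk0
  have hcomm : Commute (g ^ k.natAbs) a := by
    rw [← zpow_natCast, Int.natCast_natAbs]
    rcases abs_choice k with hk_abs | hk_abs <;> simpa [hk_abs] using hk
  have hpow : a ^ r ^ k.natAbs = a ^ s ^ k.natAbs :=
    mul_right_cancel ((hcomm.zpow_right _).eq.symm.trans (semiconjBy_pow_zpow_pow_s11 h _).eq)
  have hexp : r ^ k.natAbs = s ^ k.natAbs := injective_zpow_iff_not_isOfFinOrder.2 ha hpow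
  refine habs ((pow_left_inj₀ (abs_nonneg r) (abs_nonneg s) (Int.natAbs_ne_zero.2 hk0)).1 ?_)
  rw [← abs_pow, ← abs_pow, hexp]

theorem isCoprime_orderOf_of_semiconjBy_zpow (ha : IsOfFinOrder a) (hrs : IsCoprime r s)
    (h : SemiconjBy g (a ^ r) (a ^ s)) : IsCoprime r (orderOf a : ℤ) := by
  obtain ⟨u, hu⟩ : (Int.gcd r (orderOf a) : ℤ) ∣ r := Int.gcd_dvd_left ..
  obtain ⟨e, he⟩ : (Int.gcd r (orderOf a) : ℤ) ∣ orderOf a := Int.gcd_dvd_right ..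
  rw [Int.isCoprime_iff_gcd_eq_one]
  generalize Int.gcd r (orderOf a) = d at hu he ⊢
  have hre : (a ^ r) ^ e = 1 := by
    rw [← zpow_mul, ← orderOf_dvd_iff_zpow_eq_one, he, hu]
    exact ⟨u, by ring⟩
  have hse : a ^ (s * e) = 1 := by
    rw [zpow_mul, ← (h.zpow_right e).eq_one_iff g, hre]
  have he0 : e ≠ 0 := by
    rintro rfl
    exact ha.orderOf_pos.ne' (by simpa using he)
  have hds : (d : ℤ) ∣ s := by
    rw [← orderOf_dvd_iff_zpow_eq_one, he] at hse
    exact Int.dvd_of_mul_dvd_mul_right he0 hse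
  simpa using Int.isUnit_iff_natAbs_eq.1 (hrs.isUnit_of_dvd' ⟨u, hu⟩ hds)

theorem conj_mem_zpowers_of_semiconjBy_zpow (hr : IsCoprime r (orderOf a : ℤ))
    (h : SemiconjBy g (a ^ r) (a ^ s)) (hb : b ∈ Subgroup.zpowers a) :
    g * b * g⁻¹ ∈ Subgroup.zpowers a := by
  have ha : a ∈ Subgroup.zpowers (a ^ r) :=
    mem_zpowers_zpow_iff.2 (Int.isCoprime_iff_gcd_eq_one.1 hr)
  obtain ⟨k, rfl⟩ := Subgroup.mem_zpowers_iff.1 (Subgroup.zpowers_le.2 ha hb)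
  rw [(h.zpow_right k).eq, mul_inv_cancel_right, ← zpow_mul]
  exact Subgroup.zpow_mem_zpowers a _

namespace IsRatPow

variable {p q : ℚ}

theorem zpow (k : ℤ) : IsRatPow a k (a ^ k) :=
  ⟨Subgroup.zpow_mem_zpowers a k, 1, k, isCoprime_one_left, by simp, by simp⟩

theorem one : IsRatPow a 0 1 := by
  simpa using zpow (a := a) 0

theorem mul (hb : IsRatPow a p b) (hc : IsRatPow a q c) : IsRatPow a (p + q) (b * c) := by
  obtain ⟨hba, n, m, hn, hnp, hbn⟩ := hb
  obtain ⟨hca, n', m', hn', hnq, hcn⟩ := hc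
  have hcomm : Commute b c := by
    obtain ⟨i, rfl⟩ := hba
    obtain ⟨j, rfl⟩ := hca
    exact Commute.zpow_zpow_self a i j
  refine ⟨mul_mem hba hca, n * n', m * n' + m' * n, hn.mul_left hn', ?_, ?_⟩
  · push_cast
    rw [← hnp, ← hnq]
    ring
  · rw [hcomm.mul_zpow, zpow_mul, hbn, mul_comm n, zpow_mul, hcn, zpow_add, zpow_mul, zpow_mul]

theorem inv (hb : IsRatPow a q b) : IsRatPow a (-q) b⁻¹ := by
  obtain ⟨hba, n, m, hn, hnq, hbn⟩ := hb
  exact ⟨inv_mem hba, n, -m, hn, by push_cast; rw [← hnq]; ring, by rw [inv_zpow, hbn, zpow_neg]⟩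

theorem conj (hr0 : r ≠ 0) (hr : IsCoprime r (orderOf a : ℤ))
    (h : SemiconjBy g (a ^ r) (a ^ s)) (hb : IsRatPow a q b) :
    IsRatPow a (s / r * q) (g * b * g⁻¹) := by
  obtain ⟨hba, n, m, hn, hnq, hbn⟩ := hb
  refine ⟨conj_mem_zpowers_of_semiconjBy_zpow hr h hba, n * r, s * m, hn.mul_left hr, ?_, ?_⟩
  · have : (r : ℚ) ≠ 0 := Int.cast_ne_zero.2 hr0
    push_cast
    rw [← hnq]
    field_simp
  · calc (g * b * g⁻¹) ^ (n * r) = g * (a ^ r) ^ m * g⁻¹ := by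
          rw [conj_zpow, zpow_mul, hbn, ← zpow_mul, ← zpow_mul, mul_comm]
      _ = a ^ (s * m) := by rw [(h.zpow_right m).eq, mul_inv_cancel_right, zpow_mul]

theorem conj_zpow (hr0 : r ≠ 0) (hs0 : s ≠ 0) (hr : IsCoprime r (orderOf a : ℤ))
    (hs : IsCoprime s (orderOf a : ℤ)) (h : SemiconjBy g (a ^ r) (a ^ s)) (hb : IsRatPow a q b)
    (k : ℤ) : IsRatPow a ((s / r : ℚ) ^ k * q) (g ^ k * b * (g ^ k)⁻¹) := by
  have hsr : (s / r : ℚ) ≠ 0 := div_ne_zero (Int.cast_ne_zero.2 hs0) (Int.cast_ne_zero.2 hr0)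
  induction k with
  | zero => simpa using hb
  | succ k ih =>
    convert ih.conj hr0 hr h using 1
    · rw [zpow_add_one₀ hsr]
      ring
    · group
  | pred k ih =>
    convert ih.conj hs0 hs h.inv_symm_left using 1
    · rw [zpow_sub_one₀ hsr, inv_div]
      ring
    · group

theorem eq_one (hb : IsRatPow a 0 b) : b = 1 := by
  obtain ⟨⟨k, rfl⟩, n, m, hn, hnm, hbn⟩ := hb
  obtain rfl : m = 0 := by simpa using hnm.symm
  rw [zpow_zero] at hbn
  have hdvd : (orderOf a : ℤ) ∣ k * n := by
    rwa [orderOf_dvd_iff_zpow_eq_one, zpow_mul]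
  exact orderOf_dvd_iff_zpow_eq_one.1 (hn.symm.dvd_of_dvd_mul_right hdvd)

theorem zpow_num_eq_one (h : IsRatPow a q 1) : a ^ q.num = 1 := by
  obtain ⟨-, n, m, hn, hnq, ham⟩ := h
  rw [one_zpow] at ham
  have hnum : n * q.num = m * q.den := by
    have : (n * q.num : ℚ) = m * q.den := by rw [← hnq, mul_assoc, Rat.mul_den_eq_num]
    exact_mod_cast this
  have hdvd : (orderOf a : ℤ) ∣ n * q.num := by
    rw [hnum]
    exact (orderOf_dvd_iff_zpow_eq_one.2 ham.symm).mul_right _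
  exact orderOf_dvd_iff_zpow_eq_one.1 (hn.symm.dvd_of_dvd_mul_left hdvd)

end IsRatPow

theorem toAdd_grsAut_apply (hr : r ≠ 0) (hs : s ≠ 0) (x : Multiplicative ℚ) :
    (grsAut r s x).toAdd = s / r * x.toAdd := by
  have hsr : (s / r : ℚ) ≠ 0 := div_ne_zero (Int.cast_ne_zero.2 hs) (Int.cast_ne_zero.2 hr)
  have hunit : (grsUnit r s : ℚ) = s / r := by rw [grsUnit, dif_neg hsr, Units.val_mk0]
  rw [← hunit]
  rfl

theorem toAdd_grsAction_apply (hr : r ≠ 0) (hs : s ≠ 0) (k : Multiplicative ℤ)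
    (x : Multiplicative ℚ) :
    (grsAction r s k x).toAdd = (s / r : ℚ) ^ k.toAdd * x.toAdd := by
  have hsr : (s / r : ℚ) ≠ 0 := div_ne_zero (Int.cast_ne_zero.2 hs) (Int.cast_ne_zero.2 hr)
  rw [grsAction, zpowersHom_apply]
  induction k.toAdd generalizing x with
  | zero => simp
  | succ k ih =>
    rw [zpow_add_one, MulAut.mul_apply, ih, toAdd_grsAut_apply hr hs, zpow_add_one₀ hsr, mul_assoc]
  | pred k ih =>
    obtain ⟨y, rfl⟩ := (grsAut r s).surjective x
    rw [zpow_sub_one, MulAut.mul_apply, MulAut.inv_apply_self, ih, toAdd_grsAut_apply hr hs,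
      zpow_sub_one₀ hsr, mul_assoc, inv_mul_cancel_left₀ hsr]

/-- The conclusion reads `z = (a ^ q * g ^ k, (q, t ^ k))`. -/
theorem isRatPow_of_mem_closure (hr0 : r ≠ 0) (hs0 : s ≠ 0) (hr : IsCoprime r (orderOf a : ℤ))
    (hs : IsCoprime s (orderOf a : ℤ)) (h : SemiconjBy g (a ^ r) (a ^ s))
    {z : G × GrsAmbient r s} (hz : z ∈ Subgroup.closure {(a, grsA r s), (g, grsT r s)}) :
    IsRatPow a z.2.left.toAdd (z.1 * (g ^ z.2.right.toAdd)⁻¹) := by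
  induction hz using Subgroup.closure_induction with
  | mem z hz =>
    rcases hz with rfl | rfl
    · simpa [grsA] using IsRatPow.zpow (a := a) 1
    · simpa [grsT] using IsRatPow.one
  | one => simpa using IsRatPow.one
  | mul y z _ _ hy hz =>
    convert hy.mul (hz.conj_zpow hr0 hs0 hr hs h y.2.right.toAdd) using 1
    · simp [toAdd_grsAction_apply hr0 hs0]
    · simp [zpow_add, mul_assoc]
  | inv z _ hz =>
    convert (hz.conj_zpow hr0 hs0 hr hs h (-z.2.right.toAdd)).inv using 1
    · rw [Prod.snd_inv, SemidirectProduct.inv_left, toAdd_grsAction_apply hr0 hs0, toAdd_inv,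
        toAdd_inv, mul_neg]
    · simp [mul_assoc]

theorem isRatPow_mk_of_mem_closure {N : Subgroup G} [N.Normal] (hN : IsMulTorsion (G ⧸ N))
    (hr0 : r ≠ 0) (hs0 : s ≠ 0) (hrs : IsCoprime r s) (h : SemiconjBy g (a ^ r) (a ^ s))
    {z : G × GrsAmbient r s} (hz : z ∈ Subgroup.closure {(a, grsA r s), (g, grsT r s)}) :
    IsRatPow (a : G ⧸ N) z.2.left.toAdd ((z.1 * (g ^ z.2.right.toAdd)⁻¹ : G) : G ⧸ N) := by
  have hN' : SemiconjBy (g : G ⧸ N) (a ^ r) (a ^ s) := by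
    simpa using h.map (QuotientGroup.mk' N)
  have hz' := Subgroup.mem_map_of_mem
    ((QuotientGroup.mk' N).prodMap (MonoidHom.id (GrsAmbient r s))) hz
  rw [MonoidHom.map_closure, Set.image_pair] at hz'
  exact isRatPow_of_mem_closure hr0 hs0 (isCoprime_orderOf_of_semiconjBy_zpow (hN a) hrs hN')
    (isCoprime_orderOf_of_semiconjBy_zpow (hN a) hrs.symm hN'.inv_symm_left)
    hN' hz'

namespace ResiduallyTorsion

theorem commute (hG : ResiduallyTorsion G)
    (h : ∀ (N : Subgroup G) [N.Normal], IsMulTorsion (G ⧸ N) → Commute (b : G ⧸ N) c) :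
    Commute b c := by
  refine mul_inv_eq_one.1 (hG.eq_one fun N _ hN => ?_)
  rw [QuotientGroup.mk_mul, QuotientGroup.mk_inv, mul_inv_eq_one]
  exact (h N hN).eq

theorem eq_zero_of_isRatPow_mk_one {q : ℚ} (hG : ResiduallyTorsion G) (ha : ¬ IsOfFinOrder a)
    (h : ∀ (N : Subgroup G) [N.Normal], IsMulTorsion (G ⧸ N) → IsRatPow (a : G ⧸ N) q 1) :
    q = 0 := by
  have hnum : a ^ q.num = 1 := hG.eq_one fun N _ hN => (h N hN).zpow_num_eq_one
  exact Rat.num_eq_zero.1 (injective_zpow_iff_not_isOfFinOrder.2 ha (hnum.trans (zpow_zero a).symm))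

theorem fst_eq_one_iff_snd_eq_one (hG : ResiduallyTorsion G) (ha : ¬ IsOfFinOrder a)
    (hrs : IsCoprime r s) (habs : |r| ≠ |s|) (h : SemiconjBy g (a ^ r) (a ^ s))
    {z : G × GrsAmbient r s} (hz : z ∈ Subgroup.closure {(a, grsA r s), (g, grsT r s)}) :
    z.1 = 1 ↔ z.2 = 1 := by
  have hr0 : r ≠ 0 := ne_zero_of_semiconjBy_zpow ha habs h
  have hs0 : s ≠ 0 := ne_zero_of_semiconjBy_zpow ha habs.symm h.inv_symm_left
  have hquot (N : Subgroup G) [N.Normal] (hN : IsMulTorsion (G ⧸ N)) :=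
    isRatPow_mk_of_mem_closure hN hr0 hs0 hrs h hz
  obtain ⟨x, y⟩ := z
  constructor
  · rintro rfl
    have hright : y.right.toAdd = 0 := by
      refine eq_zero_of_commute_zpow ha habs h (hG.commute fun N _ hN => ?_)
      obtain ⟨j, hj⟩ := (hquot N hN).1
      have hg : (a : G ⧸ N) ^ (-j) = (g ^ y.right.toAdd : G) := by
        simpa [inv_eq_iff_eq_inv] using hj
      rw [← hg]
      exact (Commute.refl _).zpow_left _
    have hleft : y.left.toAdd = 0 :=
      hG.eq_zero_of_isRatPow_mk_one ha fun N _ hN => by simpa [hright] using hquot N hN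
    exact SemidirectProduct.ext hleft hright
  · rintro rfl
    exact hG.eq_one fun N _ hN => by simpa using (hquot N hN).eq_one

theorem nonempty_closure_pair_mulEquiv_grs (hG : ResiduallyTorsion G) (ha : ¬ IsOfFinOrder a)
    (hrs : IsCoprime r s) (habs : |r| ≠ |s|) (h : SemiconjBy g (a ^ r) (a ^ s)) :
    Nonempty (Subgroup.closure {a, g} ≃* Grs r s) := by
  have key := nonempty_closure_image_fst_mulEquiv_snd fun _ hz =>
    hG.fst_eq_one_iff_snd_eq_one ha hrs habs h hz
  rwa [Set.image_pair, Set.image_pair] at key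

end ResiduallyTorsion

theorem exists_isCoprime_semiconjBy_zpow_of_not_isBalanced (hG : ¬ IsBalanced G) :
    ∃ (a g : G) (r s : ℤ), ¬ IsOfFinOrder a ∧ IsCoprime r s ∧ |r| ≠ |s| ∧
      SemiconjBy g (a ^ r) (a ^ s) := by
  unfold IsBalanced at hG
  push Not at hG
  obtain ⟨x, hx, m, n, ⟨g, hg⟩, hmn⟩ := hG
  have hgcd : 0 < Int.gcd m n := by
    refine Nat.pos_of_ne_zero fun h0 => hmn ?_
    obtain ⟨rfl, rfl⟩ := Int.gcd_eq_zero_iff.1 h0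
    rfl
  obtain ⟨r, s, hrs, hm, hn⟩ := Int.exists_gcd_one hgcd
  generalize Int.gcd m n = d at hgcd hm hn
  subst hm hn
  refine ⟨x ^ d, g, r, s, fun h => (isOfFinOrder_pow.1 h).elim hx hgcd.ne',
    Int.isCoprime_iff_gcd_eq_one.2 hrs, fun h => hmn (by rw [abs_mul, abs_mul, h]), ?_⟩
  rw [← zpow_natCast, ← zpow_mul, ← zpow_mul, mul_comm _ r, mul_comm _ s]
  exact mul_inv_eq_iff_eq_mul.1 hg

end

theorem residually_finite_unbalanced_contains_grs_general {G : Type*} [Group G]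
    (hG : ResiduallyTorsion G) :
    (¬ IsBalanced G → ∃ r s : ℤ, r ≠ 0 ∧ s ≠ 0 ∧ IsCoprime r s ∧ |r| ≠ |s| ∧
      ∃ H : Subgroup G, Nonempty (H ≃* Grs r s)) ∧
    (∀ (a g : G) (r s : ℤ), ¬ IsOfFinOrder a → IsCoprime r s → |r| ≠ |s| →
      g * a ^ r * g⁻¹ = a ^ s →
      Nonempty ((Subgroup.closure {a, g} : Subgroup G) ≃* Grs r s)) := by
  refine ⟨fun hbal => ?_, fun a g r s ha hrs habs h =>
    hG.nonempty_closure_pair_mulEquiv_grs ha hrs habs (mul_inv_eq_iff_eq_mul.1 h)⟩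
  obtain ⟨a, g, r, s, ha, hrs, habs, h⟩ :=
    exists_isCoprime_semiconjBy_zpow_of_not_isBalanced hbal
  exact ⟨r, s, ne_zero_of_semiconjBy_zpow ha habs h,
    ne_zero_of_semiconjBy_zpow ha habs.symm h.inv_symm_left, hrs, habs, _,
    hG.nonempty_closure_pair_mulEquiv_grs ha hrs habs h⟩

/-- A residually finite group which is not balanced contains a subgroup isomorphic to
`G_{r,s}` for some nonzero coprime `r, s` with `|r| ≠ |s|`; indeed if
`g * a^r * g⁻¹ = a^s` with `a` of infinite order and `r, s` nonzero coprime with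
`|r| ≠ |s|`, then `⟨a, g⟩ ≅ G_{r,s}`. -/
theorem residually_finite_unbalanced_contains_grs {G : Type*} [Group G]
    (hrf : ResiduallyFinite G) :
    (¬ IsBalanced G → ∃ r s : ℤ, r ≠ 0 ∧ s ≠ 0 ∧ IsCoprime r s ∧ |r| ≠ |s| ∧
      ∃ H : Subgroup G, Nonempty (H ≃* Grs r s)) ∧
    (∀ (a g : G) (r s : ℤ), ¬ IsOfFinOrder a → r ≠ 0 → s ≠ 0 → IsCoprime r s →
      |r| ≠ |s| → g * a ^ r * g⁻¹ = a ^ s →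
      Nonempty ((Subgroup.closure {a, g} : Subgroup G) ≃* Grs r s)) :=
  have ⟨hbal, hclosure⟩ := residually_finite_unbalanced_contains_grs_general hrf.residuallyTorsion
  ⟨hbal, fun a g r s ha _ _ => hclosure a g r s ha⟩
end
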